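/- Let G be a finite connected simple graph in which every vertex has degree 1 or degree 3, together with a prescribed orientation of exactly those edges that are incident to a degree-1 vertex, such that at least one degree-1 vertex is a source (its unique edge is oriented away from it) and at least one degree-1 vertex is a sink (its unique edge is oriented toward it). Assume moreover that for every cut vertex v of G, every connected component of G with v deleted contains a degree-1 vertex of G, and for every bridge edge e of G, each of the two connected components of G with e deleted contains a degree-1 vertex of G. Then the prescribed orientation extends to an orientation of all edges of G (a choice, for each edge {a,b}, of exactly one of the directed edges (a,b) or (b,a)) such that the resulting directed graph has no directed cycles and every vertex with no incoming edge and every vertex with no outgoing edge has degree 1. -/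

import Mathlib

/-!
Orient every edge from lower to higher for a suitable height function: such an orientation is
automatically acyclic. Source leaves get height `⊥`, sink leaves height `⊤`, the other vertices get
distinct heights, and each of them needs a lower and a higher neighbour. Such a height function is
built one ear at a time. If it is defined on `S` and `w ∉ S`, the vertices of `S` adjacent to the
component of `w` outside `S` do not all have the same height: that height would be shared by source
leaves only, by sink leaves only, or would belong to a single vertex, and none of these sets
separates `w` from the other leaves. A path outside `S` joining the neighbourhoods of `x` and `y`
with `f x < f y` can then be given increasing heights just above `f x`.
-/

open Set

section HeightOrientation

variable {V α : Type*} {G : SimpleGraph V} {A B S T : Set V} {f : V → α} {v w x y : V}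

section Walk

theorem exists_walk_support_subset_of_reachable_induce {a b : S}
    (h : (G.induce S).Reachable a b) : ∃ p : G.Walk a b, ∀ v ∈ p.support, v ∈ S := by
  obtain ⟨p⟩ := h
  refine ⟨p.map (SimpleGraph.Embedding.induce S).toHom, fun v hv => ?_⟩
  obtain ⟨u, -, rfl⟩ := List.mem_map.mp (p.support_map (SimpleGraph.Embedding.induce S).toHom ▸ hv)
  exact u.2

theorem exists_walk_avoiding_of_neighborSet_subsingleton (hG : G.Preconnected)
    (hA : ∀ v ∈ A, (G.neighborSet v).Subsingleton) (hv : v ∉ A) (hw : w ∉ A) :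
    ∃ p : G.Walk v w, ∀ u ∈ p.support, u ∉ A :=
  exists_walk_support_subset_of_reachable_induce
    (hG.induce_of_degree_eq_one (s := Aᶜ) (fun u hu => hA u (not_not.mp hu)) ⟨v, hv⟩ ⟨w, hw⟩)

theorem exists_walk_avoiding_of_forall_connectedComponent (hT : T.Nonempty) (hv : v ∉ T)
    (hcut : ¬ (G.induce {u | u ≠ v}).Connected →
      ∀ c : (G.induce {u | u ≠ v}).ConnectedComponent,
        ∃ u, (G.induce {u | u ≠ v}).connectedComponentMk u = c ∧ u.1 ∈ T)
    (hw : w ≠ v) : ∃ t ∈ T, ∃ p : G.Walk w t, v ∉ p.support := by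
  obtain ⟨t, ht, hwt⟩ : ∃ t : {u | u ≠ v}, t.1 ∈ T ∧
      (G.induce {u | u ≠ v}).Reachable ⟨w, hw⟩ t := by
    by_cases hconn : (G.induce {u | u ≠ v}).Connected
    · obtain ⟨t, ht⟩ := hT
      exact ⟨⟨t, ne_of_mem_of_not_mem ht hv⟩, ht, hconn.preconnected _ _⟩
    · obtain ⟨t, hwt, ht⟩ := hcut hconn (SimpleGraph.connectedComponentMk _ ⟨w, hw⟩)
      exact ⟨t, ht, (SimpleGraph.ConnectedComponent.exact hwt).symm⟩
  obtain ⟨p, hp⟩ := exists_walk_support_subset_of_reachable_induce hwt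
  exact ⟨t, ht, p, fun hvp => hp v hvp rfl⟩

theorem idxOf_support_getVert [DecidableEq V] {p : G.Walk v w} (hp : p.IsPath) {i : ℕ}
    (hi : i ≤ p.length) : p.support.idxOf (p.getVert i) = i := by
  rw [p.getVert_eq_support_getElem hi]
  exact hp.support_nodup.idxOf_getElem _ _

theorem eq_start_or_exists_adj_idxOf_lt [DecidableEq V] {p : G.Walk v w} (hp : p.IsPath)
    (hx : x ∈ p.support) :
    x = v ∨ ∃ u ∈ p.support, G.Adj x u ∧ p.support.idxOf u < p.support.idxOf x := by
  obtain ⟨i, rfl, hi⟩ := SimpleGraph.Walk.mem_support_iff_exists_getVert.mp hx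
  cases i with
  | zero => exact .inl p.getVert_zero
  | succ i =>
    refine .inr ⟨_, p.getVert_mem_support i, (p.adj_getVert_succ hi).symm, ?_⟩
    rw [idxOf_support_getVert hp hi, idxOf_support_getVert hp (Nat.le_of_succ_le hi)]
    exact i.lt_succ_self

theorem eq_end_or_exists_adj_idxOf_gt [DecidableEq V] {p : G.Walk v w} (hp : p.IsPath)
    (hx : x ∈ p.support) :
    x = w ∨ ∃ u ∈ p.support, G.Adj x u ∧ p.support.idxOf x < p.support.idxOf u := by
  obtain ⟨i, rfl, hi⟩ := SimpleGraph.Walk.mem_support_iff_exists_getVert.mp hx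
  obtain rfl | hi := hi.eq_or_lt
  · exact .inl p.getVert_length
  · refine .inr ⟨_, p.getVert_mem_support (i + 1), p.adj_getVert_succ hi, ?_⟩
    rw [idxOf_support_getVert hp hi, idxOf_support_getVert hp hi.le]
    exact i.lt_succ_self

/-- The vertex `x ∈ S` is adjacent to the component of `w` in `G` with `S` deleted, i.e. `x` can be
the end vertex of an ear through `w`. -/
def IsAttachment (G : SimpleGraph V) (S : Set V) (w x : V) : Prop :=
  x ∈ S ∧ ∃ c, G.Adj x c ∧ ∃ p : G.Walk w c, ∀ v ∈ p.support, v ∉ S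

theorem exists_isAttachment_mem_support (p : G.Walk w x) (hw : w ∉ S) (hx : x ∈ S) :
    ∃ y ∈ p.support, IsAttachment G S w y := by
  induction p with
  | nil => exact absurd hx hw
  | @cons w u _ hwu p ih =>
    by_cases hu : u ∈ S
    · exact ⟨u, by simp, hu, w, hwu.symm, .nil, by simpa using hw⟩
    · obtain ⟨y, hy, hyS, c, hyc, q, hq⟩ := ih hu hx
      exact ⟨y, List.mem_cons_of_mem _ hy, hyS, c, hyc, .cons hwu q, by simpa [hw] using hq⟩

theorem IsAttachment.exists_isPath (hx : IsAttachment G S w x) (hy : IsAttachment G S w y) :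
    ∃ (c d : V) (p : G.Walk c d), p.IsPath ∧ (∀ v ∈ p.support, v ∉ S) ∧ G.Adj x c ∧ G.Adj y d := by
  classical
  obtain ⟨-, c, hxc, p, hp⟩ := hx
  obtain ⟨-, d, hyd, q, hq⟩ := hy
  refine ⟨c, d, (p.reverse.append q).bypass, SimpleGraph.Walk.bypass_isPath _, fun v hv => ?_,
    hxc, hyd⟩
  have hv' := SimpleGraph.Walk.support_bypass_subset_support _ hv
  rw [SimpleGraph.Walk.mem_support_append_iff, SimpleGraph.Walk.support_reverse,
    List.mem_reverse] at hv'
  exact hv'.elim (hp v) (hq v)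

end Walk

theorem exists_strictMono_mem_Ioo_diff [LinearOrder α] [DenselyOrdered α] {a b : α} (hab : a < b)
    {s : Set α} (hs : s.Finite) : ∃ e : ℕ → α, StrictMono e ∧ ∀ i, e i ∈ Ioo a b \ s := by
  obtain ⟨z, ⟨-, haz⟩, hz⟩ := ((hs.insert b).inter_of_left (Ioi a)).exists_minimal
    ⟨b, mem_insert b s, hab⟩
  have : Nonempty (Ioo a z) := (nonempty_Ioo.mpr haz).to_subtype
  obtain ⟨e, he⟩ := Nat.exists_strictMono (Ioo a z)
  have z_le : ∀ c ∈ insert b s, a < c → z ≤ c := fun c hc hac =>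
    (le_total z c).elim id (hz ⟨hc, hac⟩)
  exact ⟨fun i => e i, fun i j hij => he hij, fun i =>
    ⟨⟨(e i).2.1, (e i).2.2.trans_le (z_le b (mem_insert b s) hab)⟩, fun hi =>
      (z_le _ (mem_insert_of_mem b hi) (e i).2.1).not_gt (e i).2.2⟩⟩

/-- A partial height function on `S` for the graph `G` with sources `A` and sinks `B`: sources sit
at the bottom, sinks at the top, and the remaining vertices of `S` have distinct heights and both a
lower and a higher neighbour in `S`. The values of `f` outside `S` are irrelevant. -/
structure IsHeightOn [Preorder α] [BoundedOrder α] (G : SimpleGraph V) (A B S : Set V)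
    (f : V → α) : Prop where
  sources_subset : A ⊆ S
  sinks_subset : B ⊆ S
  eq_bot : ∀ v ∈ A, f v = ⊥
  eq_top : ∀ v ∈ B, f v = ⊤
  injOn : InjOn f (S \ (A ∪ B))
  exists_lt : ∀ v ∈ S \ (A ∪ B), ∃ u ∈ S, G.Adj v u ∧ f u < f v
  exists_gt : ∀ v ∈ S \ (A ∪ B), ∃ u ∈ S, G.Adj v u ∧ f v < f u

theorem exists_isHeightOn_union [Preorder α] [BoundedOrder α] (G : SimpleGraph V)
    (hAB : Disjoint A B) : ∃ f : V → α, IsHeightOn G A B (A ∪ B) f := by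
  classical
  refine ⟨A.piecewise ⊥ ⊤, subset_union_left, subset_union_right, fun v hv => ?_, fun v hv => ?_,
    ?_, ?_, ?_⟩
  · rw [piecewise_eq_of_mem _ _ _ hv, Pi.bot_apply]
  · rw [piecewise_eq_of_notMem _ _ _ (hAB.notMem_of_mem_right hv), Pi.top_apply]
  all_goals simp only [sdiff_self, injOn_empty, mem_empty_iff_false, false_imp_iff, implies_true]

namespace IsHeightOn

section PartialOrder

variable [PartialOrder α] [BoundedOrder α] [Nontrivial α]

theorem eq_bot_iff (h : IsHeightOn G A B S f) (hv : v ∈ S) : f v = ⊥ ↔ v ∈ A := by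
  refine ⟨fun hbot => by_contra fun hvA => ?_, h.eq_bot v⟩
  by_cases hvB : v ∈ B
  · exact bot_ne_top (hbot.symm.trans (h.eq_top v hvB))
  · obtain ⟨u, -, -, hu⟩ := h.exists_lt v ⟨hv, by simp [hvA, hvB]⟩
    exact hu.ne_bot hbot

theorem eq_top_iff (h : IsHeightOn G A B S f) (hv : v ∈ S) : f v = ⊤ ↔ v ∈ B := by
  refine ⟨fun htop => by_contra fun hvB => ?_, h.eq_top v⟩
  by_cases hvA : v ∈ A
  · exact bot_ne_top ((h.eq_bot v hvA).symm.trans htop)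
  · obtain ⟨u, -, -, hu⟩ := h.exists_gt v ⟨hv, by simp [hvA, hvB]⟩
    exact hu.ne_top htop

theorem eq_of_apply_eq (h : IsHeightOn G A B S f) (hv : v ∈ S) (hw : w ∈ S) (hvAB : v ∉ A ∪ B)
    (hvw : f v = f w) : v = w := by
  refine h.injOn ⟨hv, hvAB⟩ ⟨hw, fun hwAB => hvAB ?_⟩ hvw
  exact hwAB.imp (fun hA => (h.eq_bot_iff hv).mp (hvw.trans (h.eq_bot w hA)))
    (fun hB => (h.eq_top_iff hv).mp (hvw.trans (h.eq_top w hB)))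

end PartialOrder

theorem piecewise_ear [Preorder α] [BoundedOrder α] [DecidableEq V] [DecidablePred (· ∈ S)]
    (h : IsHeightOn G A B S f) {c d : V} {p : G.Walk c d} (hp : p.IsPath)
    (hpS : ∀ v ∈ p.support, v ∉ S) (hx : x ∈ S) (hy : y ∈ S) (hxc : G.Adj x c) (hyd : G.Adj y d)
    {e : ℕ → α} (he : StrictMono e) (he_mem : ∀ i, e i ∈ Ioo (f x) (f y) \ f '' S) :
    IsHeightOn G A B (S ∪ {v | v ∈ p.support})
      (S.piecewise f fun v => e (p.support.idxOf v)) := by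
  set g := S.piecewise f fun v => e (p.support.idxOf v)
  have g_eq : ∀ v ∈ S, g v = f v := fun v hv => piecewise_eq_of_mem _ _ _ hv
  have g_ear : ∀ v ∈ p.support, g v = e (p.support.idxOf v) := fun v hv =>
    piecewise_eq_of_notMem _ _ _ (hpS v hv)
  refine ⟨h.sources_subset.trans subset_union_left, h.sinks_subset.trans subset_union_left,
    fun v hv => (g_eq v (h.sources_subset hv)).trans (h.eq_bot v hv),
    fun v hv => (g_eq v (h.sinks_subset hv)).trans (h.eq_top v hv), ?_, ?_, ?_⟩
  · have g_ne : ∀ v ∈ S, ∀ u ∈ p.support, g v ≠ g u := fun v hv u hu huv =>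
      (he_mem _).2 ⟨v, hv, by rw [← g_eq v hv, huv, g_ear u hu]⟩
    rintro v ⟨hv | hv, hvAB⟩ u ⟨hu | hu, huAB⟩ hvu
    · exact h.injOn ⟨hv, hvAB⟩ ⟨hu, huAB⟩ (by rwa [g_eq v hv, g_eq u hu] at hvu)
    · exact absurd hvu (g_ne v hv u hu)
    · exact absurd hvu.symm (g_ne u hu v hv)
    · rw [g_ear v hv, g_ear u hu] at hvu
      exact (List.idxOf_inj hv).mp (he.injective hvu)
  · rintro v ⟨hv | hv, hvAB⟩
    · obtain ⟨u, hu, hvu, hlt⟩ := h.exists_lt v ⟨hv, hvAB⟩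
      exact ⟨u, .inl hu, hvu, by rwa [g_eq u hu, g_eq v hv]⟩
    · obtain rfl | ⟨u, hu, hvu, hlt⟩ := eq_start_or_exists_adj_idxOf_lt hp hv
      · exact ⟨x, .inl hx, hxc.symm, by rw [g_eq x hx, g_ear v hv]; exact (he_mem _).1.1⟩
      · exact ⟨u, .inr hu, hvu, by rw [g_ear u hu, g_ear v hv]; exact he hlt⟩
  · rintro v ⟨hv | hv, hvAB⟩
    · obtain ⟨u, hu, hvu, hlt⟩ := h.exists_gt v ⟨hv, hvAB⟩
      exact ⟨u, .inl hu, hvu, by rwa [g_eq u hu, g_eq v hv]⟩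
    · obtain rfl | ⟨u, hu, hvu, hlt⟩ := eq_end_or_exists_adj_idxOf_gt hp hv
      · exact ⟨y, .inl hy, hyd.symm, by rw [g_eq y hy, g_ear v hv]; exact (he_mem _).1.2⟩
      · exact ⟨u, .inr hu, hvu, by rw [g_ear u hu, g_ear v hv]; exact he hlt⟩

theorem exists_ssuperset_of_isAttachment [LinearOrder α] [BoundedOrder α] [DenselyOrdered α]
    (h : IsHeightOn G A B S f) (hS : S.Finite) (hx : IsAttachment G S w x)
    (hy : IsAttachment G S w y) (hxy : f x < f y) :
    ∃ S', S ⊂ S' ∧ ∃ g : V → α, IsHeightOn G A B S' g := by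
  classical
  obtain ⟨c, d, p, hp, hpS, hxc, hyd⟩ := hx.exists_isPath hy
  obtain ⟨e, he, he_mem⟩ := exists_strictMono_mem_Ioo_diff hxy (hS.image f)
  refine ⟨S ∪ {v | v ∈ p.support}, ?_, _, h.piecewise_ear hp hpS hx.1 hy.1 hxc hyd he he_mem⟩
  exact ssubset_union_left_iff.mpr fun hsub => hpS c p.start_mem_support (hsub p.start_mem_support)

end IsHeightOn

/-- A connected graph with disjoint nonempty sets `A`, `B` of terminals, each of degree at most one,
such that no single non-terminal vertex separates another vertex from all terminals. -/
structure IsTerminalNetwork (G : SimpleGraph V) (A B : Set V) : Prop where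
  preconnected : G.Preconnected
  sources_nonempty : A.Nonempty
  sinks_nonempty : B.Nonempty
  disjoint : Disjoint A B
  neighborSet_subsingleton : ∀ v ∈ A ∪ B, (G.neighborSet v).Subsingleton
  exists_walk_avoiding : ∀ v ∉ A ∪ B, ∀ w ≠ v, ∃ t ∈ A ∪ B, ∃ p : G.Walk w t, v ∉ p.support

namespace IsTerminalNetwork

theorem exists_walk_avoiding_level [PartialOrder α] [BoundedOrder α] [Nontrivial α]
    (hG : IsTerminalNetwork G A B) (h : IsHeightOn G A B S f) (hw : w ∉ S) (hx : x ∈ S) :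
    ∃ t ∈ S, ∃ p : G.Walk w t, ∀ v ∈ p.support, v ∈ S → f v ≠ f x := by
  by_cases hxA : x ∈ A
  · obtain ⟨t, ht⟩ := hG.sinks_nonempty
    obtain ⟨p, hp⟩ := exists_walk_avoiding_of_neighborSet_subsingleton hG.preconnected
      (fun v hv => hG.neighborSet_subsingleton v (.inl hv)) (fun hwA => hw (h.sources_subset hwA))
      (hG.disjoint.notMem_of_mem_right ht)
    refine ⟨t, h.sinks_subset ht, p, fun v hv hvS hvx => hp v hv ?_⟩
    exact (h.eq_bot_iff hvS).mp (hvx.trans (h.eq_bot x hxA))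
  by_cases hxB : x ∈ B
  · obtain ⟨t, ht⟩ := hG.sources_nonempty
    obtain ⟨p, hp⟩ := exists_walk_avoiding_of_neighborSet_subsingleton hG.preconnected
      (fun v hv => hG.neighborSet_subsingleton v (.inr hv)) (fun hwB => hw (h.sinks_subset hwB))
      (hG.disjoint.notMem_of_mem_left ht)
    refine ⟨t, h.sources_subset ht, p, fun v hv hvS hvx => hp v hv ?_⟩
    exact (h.eq_top_iff hvS).mp (hvx.trans (h.eq_top x hxB))
  have hxAB : x ∉ A ∪ B := by simp [hxA, hxB]
  obtain ⟨t, ht, p, hp⟩ := hG.exists_walk_avoiding x hxAB w (ne_of_mem_of_not_mem hx hw).symm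
  refine ⟨t, union_subset h.sources_subset h.sinks_subset ht, p, fun v hv hvS hvx => hp ?_⟩
  rwa [h.eq_of_apply_eq hx hvS hxAB hvx.symm]

variable [LinearOrder α] [BoundedOrder α] [Nontrivial α]

theorem exists_isAttachment_lt (hG : IsTerminalNetwork G A B)
    (h : IsHeightOn G A B S f) (hw : w ∉ S) :
    ∃ x y, IsAttachment G S w x ∧ IsAttachment G S w y ∧ f x < f y := by
  obtain ⟨s, hs⟩ := hG.sources_nonempty
  obtain ⟨p⟩ := hG.preconnected w s
  obtain ⟨x, -, hx⟩ := exists_isAttachment_mem_support p hw (h.sources_subset hs)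
  obtain ⟨t, ht, q, hq⟩ := hG.exists_walk_avoiding_level h hw hx.1
  obtain ⟨y, hyq, hy⟩ := exists_isAttachment_mem_support q hw ht
  obtain hlt | hlt := (hq y hyq hy.1).lt_or_gt
  · exact ⟨y, x, hy, hx, hlt⟩
  · exact ⟨x, y, hx, hy, hlt⟩

theorem exists_isHeightOn_univ [DenselyOrdered α] [Finite V]
    (hG : IsTerminalNetwork G A B) : ∃ f : V → α, IsHeightOn G A B univ f := by
  obtain ⟨S, ⟨f, hf⟩, hS⟩ := (toFinite {S | ∃ f : V → α, IsHeightOn G A B S f}).exists_maximal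
    ⟨A ∪ B, exists_isHeightOn_union G hG.disjoint⟩
  suffices S = univ from ⟨f, this ▸ hf⟩
  refine eq_univ_of_forall fun w => by_contra fun hw => ?_
  obtain ⟨x, y, hx, hy, hxy⟩ := hG.exists_isAttachment_lt hf hw
  obtain ⟨S', hSS', hS'⟩ := hf.exists_ssuperset_of_isAttachment S.toFinite hx hy hxy
  exact hSS'.not_subset (hS hS' hSS'.subset)

end IsTerminalNetwork

/-- The relation orienting each edge of `G` from its lower to its higher end vertex; edges with both
ends at the same height are left out. -/
def heightOrientation [LT α] (G : SimpleGraph V) (f : V → α) (a b : V) : Prop :=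
  G.Adj a b ∧ f a < f b

theorem heightOrientation_iff_not_swap [LinearOrder α] {a b : V} (hab : G.Adj a b)
    (hne : f a ≠ f b) : heightOrientation G f a b ↔ ¬ heightOrientation G f b a := by
  simp only [heightOrientation, hab, hab.symm, true_and, not_lt, hne.le_iff_lt]

theorem not_transGen_heightOrientation_self [Preorder α] (G : SimpleGraph V) (f : V → α) (v : V) :
    ¬ Relation.TransGen (heightOrientation G f) v v := fun hv => by
  have hlt := hv.lift (p := (· < ·)) f fun _ _ h => h.2
  rw [Relation.transGen_eq_self] at hlt
  exact lt_irrefl (f v) hlt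

section LeafOrientation

theorem neighborSet_subsingleton_of_degree_eq_one [Fintype (G.neighborSet v)]
    (hv : G.degree v = 1) : (G.neighborSet v).Subsingleton := fun _ ha _ hb =>
  (SimpleGraph.degree_eq_one_iff_existsUnique_adj.mp hv).unique ha hb

variable [G.LocallyFinite] {D₀ : V → V → Prop} {a b : V}

/-- `D₀` orients exactly the edges of `G` incident to a vertex of degree one. -/
structure IsLeafOrientation (G : SimpleGraph V) [G.LocallyFinite] (D₀ : V → V → Prop) : Prop where
  adj : ∀ a b, D₀ a b → G.Adj a b ∧ (G.degree a = 1 ∨ G.degree b = 1)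
  iff_not_swap : ∀ a b, G.Adj a b → (G.degree a = 1 ∨ G.degree b = 1) → (D₀ a b ↔ ¬ D₀ b a)

/-- The leaves of `G` whose edge is oriented away from them by `D₀`. -/
def leafSources (G : SimpleGraph V) [G.LocallyFinite] (D₀ : V → V → Prop) : Set V :=
  {v | G.degree v = 1 ∧ ∃ u, D₀ v u}

/-- The leaves of `G` whose edge is oriented toward them by `D₀`. -/
def leafSinks (G : SimpleGraph V) [G.LocallyFinite] (D₀ : V → V → Prop) : Set V :=
  {v | G.degree v = 1 ∧ ∃ u, D₀ u v}

namespace IsLeafOrientation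

theorem asymm (h : IsLeafOrientation G D₀) (hab : D₀ a b) : ¬ D₀ b a :=
  (h.iff_not_swap a b (h.adj a b hab).1 (h.adj a b hab).2).mp hab

theorem notMem_leafSources (h : IsLeafOrientation G D₀) (hab : D₀ a b) :
    b ∉ leafSources G D₀ := by
  rintro ⟨hb, u, hbu⟩
  obtain rfl : u = a := neighborSet_subsingleton_of_degree_eq_one hb
    (h.adj b u hbu).1 (h.adj a b hab).1.symm
  exact h.asymm hab hbu

theorem notMem_leafSinks (h : IsLeafOrientation G D₀) (hab : D₀ a b) :
    a ∉ leafSinks G D₀ := by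
  rintro ⟨ha, u, hua⟩
  obtain rfl : u = b := neighborSet_subsingleton_of_degree_eq_one ha
    (h.adj u a hua).1.symm (h.adj a b hab).1
  exact h.asymm hab hua

theorem disjoint_leafSources_leafSinks (h : IsLeafOrientation G D₀) :
    Disjoint (leafSources G D₀) (leafSinks G D₀) :=
  disjoint_left.mpr fun _ hv ⟨_, _, hu⟩ => h.notMem_leafSources hu hv

theorem leafSources_union_leafSinks (h : IsLeafOrientation G D₀) :
    leafSources G D₀ ∪ leafSinks G D₀ = {v | G.degree v = 1} := by
  refine Subset.antisymm (union_subset (fun v hv => hv.1) fun v hv => hv.1) fun v hv => ?_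
  obtain ⟨u, hvu, -⟩ := SimpleGraph.degree_eq_one_iff_existsUnique_adj.mp hv
  by_cases huv : D₀ u v
  · exact .inr ⟨hv, u, huv⟩
  · exact .inl ⟨hv, u, (h.iff_not_swap v u hvu (.inl hv)).mpr huv⟩

variable [PartialOrder α] [BoundedOrder α] [Nontrivial α]

theorem lt_of_isHeightOn (h : IsLeafOrientation G D₀)
    (hf : IsHeightOn G (leafSources G D₀) (leafSinks G D₀) univ f) (hab : D₀ a b) :
    f a < f b := by
  obtain ha | hb := (h.adj a b hab).2
  · rw [hf.eq_bot a ⟨ha, b, hab⟩, bot_lt_iff_ne_bot, ne_eq, hf.eq_bot_iff (mem_univ b)]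
    exact h.notMem_leafSources hab
  · rw [hf.eq_top b ⟨hb, a, hab⟩, lt_top_iff_ne_top, ne_eq, hf.eq_top_iff (mem_univ a)]
    exact h.notMem_leafSinks hab

theorem ne_of_isHeightOn (h : IsLeafOrientation G D₀)
    (hf : IsHeightOn G (leafSources G D₀) (leafSinks G D₀) univ f) (hab : G.Adj a b) :
    f a ≠ f b := by
  by_cases hleaf : G.degree a = 1 ∨ G.degree b = 1
  · by_cases hba : D₀ b a
    · exact (h.lt_of_isHeightOn hf hba).ne'
    · exact (h.lt_of_isHeightOn hf ((h.iff_not_swap a b hab hleaf).mpr hba)).ne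
  · refine fun hfab => hab.ne (hf.eq_of_apply_eq (mem_univ a) (mem_univ b) ?_ hfab)
    rw [h.leafSources_union_leafSinks]
    exact fun ha => hleaf (.inl ha)

end IsLeafOrientation

end LeafOrientation

end HeightOrientation

theorem extend_orientation_general {V : Type*} [Finite V] (G : SimpleGraph V) [G.LocallyFinite]
    (hconn : G.Connected)
    (D₀ : V → V → Prop)
    (hD₀dom : ∀ a b : V, D₀ a b → G.Adj a b ∧ (G.degree a = 1 ∨ G.degree b = 1))
    (hD₀tot : ∀ a b : V, G.Adj a b → (G.degree a = 1 ∨ G.degree b = 1) →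
      (D₀ a b ↔ ¬ D₀ b a))
    (hsource : ∃ v u : V, G.degree v = 1 ∧ D₀ v u)
    (hsink : ∃ v u : V, G.degree v = 1 ∧ D₀ u v)
    (hcut : ∀ v : V, ¬ (G.induce {u : V | u ≠ v}).Connected →
      ∀ c : (G.induce {u : V | u ≠ v}).ConnectedComponent,
        ∃ u : {u : V // u ∈ {u : V | u ≠ v}},
          (G.induce {u : V | u ≠ v}).connectedComponentMk u = c ∧ G.degree u.1 = 1) :
    ∃ D : V → V → Prop,
      (∀ a b : V, D a b → G.Adj a b) ∧
      (∀ a b : V, G.Adj a b → (D a b ↔ ¬ D b a)) ∧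
      (∀ a b : V, D₀ a b → D a b) ∧
      (∀ v : V, ¬ Relation.TransGen D v v) ∧
      (∀ v : V, ((∀ u, ¬ D u v) ∨ (∀ u, ¬ D v u)) → G.degree v = 1) := by
  have hD₀ : IsLeafOrientation G D₀ := ⟨hD₀dom, hD₀tot⟩
  have hleaf := hD₀.leafSources_union_leafSinks
  obtain ⟨s, u, hs, hsu⟩ := hsource
  obtain ⟨t, u', ht, htu⟩ := hsink
  have hG : IsTerminalNetwork G (leafSources G D₀) (leafSinks G D₀) :=
    { preconnected := hconn.preconnected
      sources_nonempty := ⟨s, hs, u, hsu⟩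
      sinks_nonempty := ⟨t, ht, u', htu⟩
      disjoint := hD₀.disjoint_leafSources_leafSinks
      neighborSet_subsingleton := hleaf ▸ fun _ => neighborSet_subsingleton_of_degree_eq_one
      exists_walk_avoiding := hleaf ▸ fun v hv _ =>
        exists_walk_avoiding_of_forall_connectedComponent ⟨s, hs⟩ hv (hcut v) }
  obtain ⟨f, hf⟩ := hG.exists_isHeightOn_univ (α := unitInterval)
  refine ⟨heightOrientation G f, fun a b hab => hab.1,
    fun a b hab => heightOrientation_iff_not_swap hab (hD₀.ne_of_isHeightOn hf hab),
    fun a b hab => ⟨(hD₀dom a b hab).1, hD₀.lt_of_isHeightOn hf hab⟩,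
    not_transGen_heightOrientation_self G f, fun v hv => by_contra fun hvleaf => ?_⟩
  have hvAB : v ∈ univ \ (leafSources G D₀ ∪ leafSinks G D₀) := ⟨mem_univ v, hleaf ▸ hvleaf⟩
  obtain ⟨a, -, hva, hav⟩ := hf.exists_lt v hvAB
  obtain ⟨b, -, hvb, hbv⟩ := hf.exists_gt v hvAB
  exact hv.elim (fun h => h a ⟨hva.symm, hav⟩) (fun h => h b ⟨hvb, hbv⟩)

/-- Lemma 5.8 of the paper: Let `G` be a finite connected simple graph
in which every vertex has degree 1 or 3, together with a prescribed orientation `D₀`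
of exactly those edges incident to a degree-1 vertex, containing both a source leaf
and a sink leaf.  Assume every connected component obtained by deleting any cut
vertex contains a degree-1 vertex of `G`, and every connected component obtained by
deleting any bridge contains a degree-1 vertex of `G`.  Then `D₀` extends to an
acyclic orientation `D` of all edges of `G` in which every source (no incoming edge)
and every sink (no outgoing edge) is a degree-1 vertex. -/
theorem extend_orientation {V : Type*} [Fintype V] [DecidableEq V]
    (G : SimpleGraph V) [DecidableRel G.Adj]
    (hconn : G.Connected)
    (hdeg : ∀ v : V, G.degree v = 1 ∨ G.degree v = 3)
    (D₀ : V → V → Prop)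
    -- `D₀` orients only edges incident to a degree-1 vertex
    (hD₀dom : ∀ a b : V, D₀ a b → G.Adj a b ∧ (G.degree a = 1 ∨ G.degree b = 1))
    -- `D₀` orients every such edge, in exactly one direction
    (hD₀tot : ∀ a b : V, G.Adj a b → (G.degree a = 1 ∨ G.degree b = 1) →
      (D₀ a b ↔ ¬ D₀ b a))
    -- some degree-1 vertex is a source: its unique edge points away from it
    (hsource : ∃ v u : V, G.degree v = 1 ∧ D₀ v u)
    -- some degree-1 vertex is a sink: its unique edge points toward it
    (hsink : ∃ v u : V, G.degree v = 1 ∧ D₀ u v)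
    -- every component of `G` minus a cut vertex contains a degree-1 vertex of `G`
    (hcut : ∀ v : V, ¬ (G.induce {u : V | u ≠ v}).Connected →
      ∀ c : (G.induce {u : V | u ≠ v}).ConnectedComponent,
        ∃ u : {u : V // u ∈ {u : V | u ≠ v}},
          (G.induce {u : V | u ≠ v}).connectedComponentMk u = c ∧ G.degree u.1 = 1)
    -- every component of `G` minus a bridge contains a degree-1 vertex of `G`
    (hbridge : ∀ a b : V, G.IsBridge s(a, b) →
      ∀ c : (G.deleteEdges {s(a, b)}).ConnectedComponent,
        ∃ u : V, (G.deleteEdges {s(a, b)}).connectedComponentMk u = c ∧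
          G.degree u = 1) :
    ∃ D : V → V → Prop,
      (∀ a b : V, D a b → G.Adj a b) ∧
      (∀ a b : V, G.Adj a b → (D a b ↔ ¬ D b a)) ∧
      (∀ a b : V, D₀ a b → D a b) ∧
      Irreflexive (Relation.TransGen D) ∧
      (∀ v : V, ((∀ u, ¬ D u v) ∨ (∀ u, ¬ D v u)) → G.degree v = 1) :=
  extend_orientation_general G hconn D₀ hD₀dom hD₀tot hsource hsink hcut
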